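/- Assume: (a) E F = 0 and E y_m ≤ 0, so that E(α y_m + F z) ≤ 0 for all α ≥ 0 and z ∈ ℝ^n; (b) V_j F = I_n for every j; (c) for every y with E y ≤ 0, P(y) equals the convex hull of V_1 y,…,V_v y; (d) X = {x : H^x x ≤ h^x} and U = {u : H^u u ≤ h^u} are polytopic; (e) y_m ∈ ℝ^f and u_{m,1},…,u_{m,v} ∈ ℝ^m satisfy F(A_i (V_j y_m) + B_i u_{m,j}) + d ≤ y_m, V_j y_m ∈ X, and u_{m,j} ∈ U for all i, j; (f) W is nonempty with F w ≤ d for all w ∈ W. Let (z_k, α_k)_{k ∈ ℕ} and (v_k)_{k ∈ ℕ} satisfy ((z_k, α_k), v_k, (z_{k+1}, α_{k+1})) ∈ S̄ for all k. Then the sequence of polytopes (P(α_k y_m + F z_k))_{k ∈ ℕ} is a feasible robust control tube: P(α_k y_m + F z_k) ⊆ X, and for every x ∈ P(α_k y_m + F z_k) there exists u ∈ U with A x + B u + w ∈ P(α_{k+1} y_m + F z_{k+1}) for all (A,B) ∈ Δ and w ∈ W. -/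

import Mathlib

open Matrix

/-!
Since `V_j F = I`, the vertices of `P(α y_m + F z)` are the points `α V_j y_m + z`. At such a vertex
the input `α u_{m,j} + v` is admissible, because the conditions defining `S̄` are the vertex
conditions for `(y_m, u_m)` scaled by `α` and shifted by `(z, v)`. The dynamics are linear in the
pair `(x, u)`, so the states that can be steered robustly into a convex set form a convex set, and
containing the vertices it contains the whole polytope. For fixed `(x, u)` they are also linear in
`(A, B)`, which reduces `Δ` to its generators.
-/

section RobustControlTube

variable {𝕜 : Type*} [CommRing 𝕜] {f n m e ι κ p q : Type*} [Fintype n] [Fintype m]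

/-- The robust predecessor of `T`: the states from which a single input in `U`, chosen before the
model in `Δ` and the disturbance in `W` are known, forces the successor state into `T`. -/
def robustPredecessor (Δ : Set (Matrix n n 𝕜 × Matrix n m 𝕜)) (W : Set (n → 𝕜))
    (U : Set (m → 𝕜)) (T : Set (n → 𝕜)) : Set (n → 𝕜) :=
  {x | ∃ u ∈ U, ∀ AB ∈ Δ, ∀ w ∈ W, AB.1 *ᵥ x + AB.2 *ᵥ u + w ∈ T}

/-- A feasible robust control tube: a sequence of subsets of `X`, each contained in the robust
predecessor of the next. -/
def IsFeasibleRobustControlTube (Δ : Set (Matrix n n 𝕜 × Matrix n m 𝕜)) (W : Set (n → 𝕜))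
    (X : Set (n → 𝕜)) (U : Set (m → 𝕜)) (T : ℕ → Set (n → 𝕜)) : Prop :=
  ∀ k, T k ⊆ X ∧ T k ⊆ robustPredecessor Δ W U (T (k + 1))

theorem mulVec_smul_add_mulVec_of_mul_eq_one [Fintype f] [DecidableEq n] {F : Matrix f n 𝕜}
    {V : Matrix n f 𝕜} (hVF : V * F = 1) (α : 𝕜) (y : f → 𝕜) (z : n → 𝕜) :
    V *ᵥ (α • y + F *ᵥ z) = α • V *ᵥ y + z := by
  rw [mulVec_add, mulVec_smul, mulVec_mulVec, hVF, one_mulVec]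

variable [PartialOrder 𝕜]

/-- The polyhedron `{x | F x ≤ y}` with facet normals the rows of `F`. It serves for the tube
sections `P(y)` and for the constraint sets `X` and `U`. -/
def polyhedron (F : Matrix f n 𝕜) (y : f → 𝕜) : Set (n → 𝕜) :=
  {x | F *ᵥ x ≤ y}

/-- The homothetic admissible set `S̄` of tuples `((z, α), v, (z⁺, α⁺))`. The tightenings `hxm` and
`hum` are parameters, in the paper the rowwise maxima of `Hx V_j y_m` and `Hu u_{m,j}` over `j`. -/
def homotheticAdmissibleSet (F : Matrix f n 𝕜) (A : ι → Matrix n n 𝕜) (B : ι → Matrix n m 𝕜)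
    (d ym : f → 𝕜) (Hx : Matrix p n 𝕜) (hx hxm : p → 𝕜) (Hu : Matrix q m 𝕜) (hu hum : q → 𝕜) :
    Set (((n → 𝕜) × 𝕜) × (m → 𝕜) × ((n → 𝕜) × 𝕜)) :=
  {((z, α), v, (z', α')) | 0 ≤ α ∧ Hx *ᵥ z + α • hxm ≤ hx ∧ Hu *ᵥ v + α • hum ≤ hu ∧
    ∀ i, F *ᵥ (A i *ᵥ z + B i *ᵥ v) + (1 - α) • d + α • ym ≤ α' • ym + F *ᵥ z'}

theorem convex_robustPredecessor (Δ : Set (Matrix n n 𝕜 × Matrix n m 𝕜)) (W : Set (n → 𝕜))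
    {U : Set (m → 𝕜)} {T : Set (n → 𝕜)} (hU : Convex 𝕜 U) (hT : Convex 𝕜 T) :
    Convex 𝕜 (robustPredecessor Δ W U T) := by
  rintro x ⟨u, hu, hxu⟩ x' ⟨u', hu', hxu'⟩ a b ha hb hab
  refine ⟨a • u + b • u', hU hu hu' ha hb hab, fun AB hAB w hw => ?_⟩
  have successor_combo : AB.1 *ᵥ (a • x + b • x') + AB.2 *ᵥ (a • u + b • u') + w =
      a • (AB.1 *ᵥ x + AB.2 *ᵥ u + w) + b • (AB.1 *ᵥ x' + AB.2 *ᵥ u' + w) := by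
    nth_rw 1 [← Convex.combo_self hab w]
    simp only [mulVec_add, mulVec_smul, smul_add]
    abel
  rw [successor_combo]
  exact hT (hxu AB hAB w hw) (hxu' AB hAB w hw) ha hb hab

theorem convex_setOf_successor_mem {T : Set (n → 𝕜)} (hT : Convex 𝕜 T) (x : n → 𝕜) (u : m → 𝕜)
    (w : n → 𝕜) :
    Convex 𝕜 {AB : Matrix n n 𝕜 × Matrix n m 𝕜 | AB.1 *ᵥ x + AB.2 *ᵥ u + w ∈ T} := by
  rintro ⟨A, B⟩ hAB ⟨A', B'⟩ hAB' a b ha hb hab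
  have successor_combo : (a • A + b • A') *ᵥ x + (a • B + b • B') *ᵥ u + w =
      a • (A *ᵥ x + B *ᵥ u + w) + b • (A' *ᵥ x + B' *ᵥ u + w) := by
    nth_rw 1 [← Convex.combo_self hab w]
    simp only [add_mulVec, smul_mulVec, smul_add]
    abel
  change (a • A + b • A') *ᵥ x + (a • B + b • B') *ᵥ u + w ∈ T
  rw [successor_combo]
  exact hT hAB hAB' ha hb hab

theorem robustPredecessor_convexHull (Δ : Set (Matrix n n 𝕜 × Matrix n m 𝕜)) (W : Set (n → 𝕜))
    (U : Set (m → 𝕜)) {T : Set (n → 𝕜)} (hT : Convex 𝕜 T) :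
    robustPredecessor (convexHull 𝕜 Δ) W U T = robustPredecessor Δ W U T := by
  apply Set.Subset.antisymm
  · rintro x ⟨u, hu, hxu⟩
    exact ⟨u, hu, fun AB hAB => hxu AB (subset_convexHull 𝕜 Δ hAB)⟩
  · rintro x ⟨u, hu, hxu⟩
    refine ⟨u, hu, fun AB hAB w hw => ?_⟩
    exact convexHull_min (fun P hP => hxu P hP w hw) (convex_setOf_successor_mem hT x u w) hAB

variable [IsOrderedRing 𝕜]

theorem convex_polyhedron (F : Matrix f n 𝕜) (y : f → 𝕜) : Convex 𝕜 (polyhedron F y) :=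
  (convex_Iic y).linear_preimage F.mulVecLin

theorem mulVec_smul_add_mulVec_nonpos [Fintype f] {E : Matrix e f 𝕜} {F : Matrix f n 𝕜}
    (hEF : E * F = 0) {y : f → 𝕜} (hy : E *ᵥ y ≤ 0) {α : 𝕜} (hα : 0 ≤ α) (z : n → 𝕜) :
    E *ᵥ (α • y + F *ᵥ z) ≤ 0 := by
  rw [mulVec_add, mulVec_smul, mulVec_mulVec, hEF, zero_mulVec, add_zero]
  exact smul_nonpos_of_nonneg_of_nonpos hα hy

theorem polyhedron_smul_add_mulVec_subset_of_vertices_mem [Fintype f] [DecidableEq n]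
    {F : Matrix f n 𝕜} {E : Matrix e f 𝕜} {V : κ → Matrix n f 𝕜}
    (hEF : E * F = 0) (hVF : ∀ j, V j * F = 1)
    (hconv : ∀ y, E *ᵥ y ≤ 0 → polyhedron F y ⊆ convexHull 𝕜 (Set.range fun j => V j *ᵥ y))
    {y : f → 𝕜} (hy : E *ᵥ y ≤ 0) {α : 𝕜} (hα : 0 ≤ α) {z : n → 𝕜} {C : Set (n → 𝕜)}
    (hC : Convex 𝕜 C) (hmem : ∀ j, α • V j *ᵥ y + z ∈ C) :
    polyhedron F (α • y + F *ᵥ z) ⊆ C := by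
  refine (hconv _ (mulVec_smul_add_mulVec_nonpos hEF hy hα z)).trans (convexHull_min ?_ hC)
  rintro _ ⟨j, rfl⟩
  simpa only [mulVec_smul_add_mulVec_of_mul_eq_one (hVF j)] using hmem j

theorem smul_add_mem_polyhedron {H : Matrix p n 𝕜} {h hm : p → 𝕜} {α : 𝕜} {x z : n → 𝕜}
    (hα : 0 ≤ α) (hx : x ∈ polyhedron H hm) (hz : H *ᵥ z + α • hm ≤ h) :
    α • x + z ∈ polyhedron H h :=
  calc
    H *ᵥ (α • x + z) = H *ᵥ z + α • H *ᵥ x := by rw [mulVec_add, mulVec_smul, add_comm]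
    _ ≤ H *ᵥ z + α • hm := by gcongr; exact hx
    _ ≤ h := hz

theorem homothetic_successor_mem_polyhedron {F : Matrix f n 𝕜} {A : Matrix n n 𝕜}
    {B : Matrix n m 𝕜} {d y y' : f → 𝕜} {x z w : n → 𝕜} {u v : m → 𝕜} {α : 𝕜} (hα : 0 ≤ α)
    (hxu : F *ᵥ (A *ᵥ x + B *ᵥ u) + d ≤ y)
    (hzv : F *ᵥ (A *ᵥ z + B *ᵥ v) + (1 - α) • d + α • y ≤ y') (hw : w ∈ polyhedron F d) :
    A *ᵥ (α • x + z) + B *ᵥ (α • u + v) + w ∈ polyhedron F y' :=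
  calc
    F *ᵥ (A *ᵥ (α • x + z) + B *ᵥ (α • u + v) + w)
        = F *ᵥ (A *ᵥ z + B *ᵥ v) + α • F *ᵥ (A *ᵥ x + B *ᵥ u) + F *ᵥ w := by
      simp only [mulVec_add, mulVec_smul, smul_add]
      abel
    _ ≤ F *ᵥ (A *ᵥ z + B *ᵥ v) + α • (y - d) + d := by
      gcongr
      · exact le_sub_iff_add_le.mpr hxu
      · exact hw
    _ = F *ᵥ (A *ᵥ z + B *ᵥ v) + (1 - α) • d + α • y := by
      module
    _ ≤ y' := hzv

theorem statement11_general [Fintype f] [DecidableEq n]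
    (F : Matrix f n 𝕜) (E : Matrix e f 𝕜) (V : κ → Matrix n f 𝕜)
    (A : ι → Matrix n n 𝕜) (B : ι → Matrix n m 𝕜) (W : Set (n → 𝕜)) (d : f → 𝕜)
    (Hx : Matrix p n 𝕜) (hx : p → 𝕜) (Hu : Matrix q m 𝕜) (hu : q → 𝕜)
    (ym : f → 𝕜) (um : κ → m → 𝕜) (hxm : p → 𝕜) (hum : q → 𝕜)
    (hhxm : ∀ j, V j *ᵥ ym ∈ polyhedron Hx hxm) (hhum : ∀ j, um j ∈ polyhedron Hu hum)
    (hEF : E * F = 0) (hEym : E *ᵥ ym ≤ 0) (hVF : ∀ j, V j * F = 1)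
    (hconv : ∀ y, E *ᵥ y ≤ 0 → polyhedron F y ⊆ convexHull 𝕜 (Set.range fun j => V j *ᵥ y))
    (hinv : ∀ i j, F *ᵥ (A i *ᵥ (V j *ᵥ ym) + B i *ᵥ um j) + d ≤ ym)
    (hWd : W ⊆ polyhedron F d)
    (z : ℕ → n → 𝕜) (α : ℕ → 𝕜) (v : ℕ → m → 𝕜)
    (hS : ∀ k, ((z k, α k), v k, (z (k + 1), α (k + 1))) ∈
      homotheticAdmissibleSet F A B d ym Hx hx hxm Hu hu hum) :
    IsFeasibleRobustControlTube (convexHull 𝕜 (Set.range fun i => (A i, B i))) W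
      (polyhedron Hx hx) (polyhedron Hu hu) fun k => polyhedron F (α k • ym + F *ᵥ z k) := by
  intro k
  obtain ⟨hα, hzX, hvU, hstep⟩ := hS k
  constructor
  · exact polyhedron_smul_add_mulVec_subset_of_vertices_mem hEF hVF hconv hEym hα
      (convex_polyhedron Hx hx) fun j => smul_add_mem_polyhedron hα (hhxm j) hzX
  · rw [robustPredecessor_convexHull _ _ _ (convex_polyhedron _ _)]
    refine polyhedron_smul_add_mulVec_subset_of_vertices_mem hEF hVF hconv hEym hα
      (convex_robustPredecessor _ _ (convex_polyhedron _ _) (convex_polyhedron _ _)) fun j =>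
      ⟨α k • um j + v k, smul_add_mem_polyhedron hα (hhum j) hvU, ?_⟩
    rintro _ ⟨i, rfl⟩ w hw
    exact homothetic_successor_mem_polyhedron hα (hinv i j) (hstep i) (hWd hw)

end RobustControlTube

/-- Corollary 2: a sequence of homothetic parameters in the homothetic admissible
set `S̄` generates a feasible robust control tube `(P(α_k y_m + F z_k))_{k ∈ ℕ}`. -/
theorem statement11
    {f n m r v e qx qu : ℕ}
    (F : Matrix (Fin f) (Fin n) ℝ)
    (E : Matrix (Fin e) (Fin f) ℝ)
    (V : Fin v → Matrix (Fin n) (Fin f) ℝ)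
    (A : Fin r → Matrix (Fin n) (Fin n) ℝ)
    (B : Fin r → Matrix (Fin n) (Fin m) ℝ)
    (W : Set (Fin n → ℝ)) (d : Fin f → ℝ)
    (Hx : Matrix (Fin qx) (Fin n) ℝ) (hx : Fin qx → ℝ)
    (Hu : Matrix (Fin qu) (Fin m) ℝ) (hu : Fin qu → ℝ)
    (ym : Fin f → ℝ) (um : Fin v → Fin m → ℝ)
    (hxm : Fin qx → ℝ)
    (hhxm : ∀ rr : Fin qx, IsGreatest (Set.range fun j : Fin v => (Hx *ᵥ ((V j) *ᵥ ym)) rr) (hxm rr))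
    (hum : Fin qu → ℝ)
    (hhum : ∀ rr : Fin qu, IsGreatest (Set.range fun j : Fin v => (Hu *ᵥ um j) rr) (hum rr))
    -- (a) configuration-cone compatibility
    (hEF : E * F = 0) (hEym : E *ᵥ ym ≤ 0)
    -- (b) translation-consistency of the vertex maps
    (hVF : ∀ j : Fin v, V j * F = (1 : Matrix (Fin n) (Fin n) ℝ))
    -- (c) vertex representation of configuration-constrained polytopes
    (hconv : ∀ y' : Fin f → ℝ, E *ᵥ y' ≤ 0 →
      {x : Fin n → ℝ | F *ᵥ x ≤ y'} =
        convexHull ℝ (Set.range fun j : Fin v => (V j) *ᵥ y'))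
    -- (e) (y_m, u_m) is robust control invariant and feasible
    (hinv : ∀ (i : Fin r) (j : Fin v),
      F *ᵥ (A i *ᵥ ((V j) *ᵥ ym) + B i *ᵥ um j) + d ≤ ym)
    (hymX : ∀ j : Fin v, Hx *ᵥ ((V j) *ᵥ ym) ≤ hx)
    (humU : ∀ j : Fin v, Hu *ᵥ um j ≤ hu)
    -- (f) disturbance set
    (hWne : W.Nonempty) (hWd : ∀ w ∈ W, F *ᵥ w ≤ d)
    -- the homothetic sequence lies in S̄
    (z : ℕ → Fin n → ℝ) (α : ℕ → ℝ) (vv : ℕ → Fin m → ℝ)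
    (hSbar : ∀ k : ℕ,
      0 ≤ α k ∧
      Hx *ᵥ z k + α k • hxm ≤ hx ∧
      Hu *ᵥ vv k + α k • hum ≤ hu ∧
      ∀ i : Fin r,
        F *ᵥ (A i *ᵥ z k + B i *ᵥ vv k) + (1 - α k) • d + α k • ym
          ≤ α (k + 1) • ym + F *ᵥ z (k + 1)) :
    -- conclusion: (P(α_k y_m + F z_k))_k is a feasible robust control tube
    ∀ k : ℕ,
      ({x : Fin n → ℝ | F *ᵥ x ≤ α k • ym + F *ᵥ z k} ⊆ {x : Fin n → ℝ | Hx *ᵥ x ≤ hx}) ∧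
      ∀ x : Fin n → ℝ, F *ᵥ x ≤ α k • ym + F *ᵥ z k →
        ∃ u : Fin m → ℝ, Hu *ᵥ u ≤ hu ∧
          ∀ AB ∈ convexHull ℝ (Set.range fun i : Fin r => (A i, B i)),
            ∀ w ∈ W,
              F *ᵥ (AB.1 *ᵥ x + AB.2 *ᵥ u + w) ≤ α (k + 1) • ym + F *ᵥ z (k + 1) := by
  exact statement11_general F E V A B W d Hx hx Hu hu ym um hxm hum
    (fun j rr => (hhxm rr).2 ⟨j, rfl⟩) (fun j rr => (hhum rr).2 ⟨j, rfl⟩) hEF hEym hVF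
    (fun y hy => (hconv y hy).subset) hinv hWd z α vv hSbar
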